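/- Let ρ_k be the standard mollifier on ℝ^3 at scale 1/k asserted above. For 0 ≤ α < 3 and β ∈ ℝ, there is a constant C independent of k such that ∫_{ℝ^3} ρ_k(y) |x-y|^(-α) ⟨x-y⟩^(-β) dy ≤ C |x|^(-α) ⟨x⟩^(-β) for all x ≠ 0. -/

import Mathlib

open MeasureTheory

lemma aux_g (α : ℝ) (hα3 : α < 3) :
    Integrable (fun w : EuclideanSpace ℝ (Fin 3) =>
      (Metric.ball (0 : EuclideanSpace ℝ (Fin 3)) 1).indicator (fun w => ‖w‖ ^ (-α)) w) := by
  rw [integrable_indicator_iff Metric.isOpen_ball.measurableSet]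
  refine integrableOn_ball_of_norm_le_rpow (C := 1) (α := α) (by simp) (by simpa using hα3) ?_ ?_
  · refine Filter.Eventually.of_forall fun x => ?_
    rw [one_mul, Real.norm_of_nonneg (by positivity)]
  · exact (measurable_norm.pow_const (-α)).aestronglyMeasurable

lemma aux_bracket (β : ℝ) (x y : EuclideanSpace ℝ (Fin 3)) (hy : ‖y‖ ≤ 1) :
    (Real.sqrt (1 + ‖x - y‖ ^ 2)) ^ (-β) ≤
      2 ^ |β| * (Real.sqrt (1 + ‖x‖ ^ 2)) ^ (-β) := by
  set a := Real.sqrt (1 + ‖x - y‖ ^ 2) with ha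
  set b := Real.sqrt (1 + ‖x‖ ^ 2) with hb
  have key : ∀ s t : ℝ, 0 ≤ s → 0 ≤ t → s ≤ t + 1 →
      Real.sqrt (1 + s ^ 2) ≤ 2 * Real.sqrt (1 + t ^ 2) := by
    intro s t hs ht hst
    rw [Real.sqrt_le_left (by positivity), mul_pow, Real.sq_sqrt (by positivity)]
    nlinarith [sq_nonneg (t - 1)]
  have h1 : ‖x - y‖ ≤ ‖x‖ + 1 := (norm_sub_le _ _).trans (by linarith)
  have h2 : ‖x‖ ≤ ‖x - y‖ + 1 := by
    have := norm_add_le (x - y) y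
    rw [sub_add_cancel] at this
    linarith
  have hab := key _ _ (norm_nonneg _) (norm_nonneg _) h1
  have hba := key _ _ (norm_nonneg _) (norm_nonneg _) h2
  rw [← ha, ← hb] at hab hba
  have ha0 : 0 < a := Real.sqrt_pos.2 (by positivity)
  have hb0 : 0 < b := Real.sqrt_pos.2 (by positivity)
  rcases le_total 0 β with h | h
  · rw [abs_of_nonneg h]
    have := Real.rpow_le_rpow_of_nonpos (x := b / 2) (y := a) (z := -β) (by positivity)
      (by linarith) (by linarith)
    rw [Real.div_rpow hb0.le (by norm_num), Real.rpow_neg (x := 2) (by norm_num), div_inv_eq_mul] at this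
    linarith
  · rw [abs_of_nonpos h, ← Real.mul_rpow (by norm_num) hb0.le]
    exact Real.rpow_le_rpow ha0.le hab (by linarith)

lemma aux_sing (α : ℝ) (hα0 : 0 ≤ α) (X z : EuclideanSpace ℝ (Fin 3)) (hX : X ≠ 0) (hz : ‖z‖ ≤ 1) :
    ‖X - z‖ ^ (-α) ≤ 2 ^ α * ‖X‖ ^ (-α) * (1 +
      (Metric.ball (0 : EuclideanSpace ℝ (Fin 3)) 1).indicator (fun w => ‖w‖ ^ (-α)) (X - z)) := by
  have hX0 : 0 < ‖X‖ := norm_pos_iff.2 hX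
  have h2 : ‖X‖ ≤ ‖X - z‖ + 1 := by
    have := norm_add_le (X - z) z
    rw [sub_add_cancel] at this
    linarith
  have e : (‖X‖ / 2) ^ (-α) = 2 ^ α * ‖X‖ ^ (-α) := by
    rw [Real.div_rpow hX0.le (by norm_num), Real.rpow_neg (x := 2) (by norm_num), div_inv_eq_mul,
      mul_comm]
  rw [← e]
  by_cases hd : ‖X - z‖ < 1
  · rw [Set.indicator_of_mem (by simpa using hd)]
    have := Real.rpow_le_rpow_of_nonpos (x := ‖X‖ / 2) (y := 1) (z := -α) (by positivity)
      (by linarith) (by linarith)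
    rw [Real.one_rpow] at this
    have hn : 0 ≤ ‖X - z‖ ^ (-α) := by positivity
    nlinarith
  · rw [Set.indicator_of_notMem (by simpa using hd), add_zero, mul_one]
    exact Real.rpow_le_rpow_of_nonpos (by positivity) (by linarith) (by linarith)

theorem stmt8 (ρ : EuclideanSpace ℝ (Fin 3) → ℝ)
    (hρsm : ContDiff ℝ (⊤ : ℕ∞) ρ) (hρnn : ∀ y, 0 ≤ ρ y)
    (hρsupp : ∀ y, ρ y ≠ 0 → ‖y‖ < 1)
    (hρint : ∫ y, ρ y = 1)
    (ρk : ℕ → EuclideanSpace ℝ (Fin 3) → ℝ)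
    (hρk : ∀ k y, ρk k y = (k : ℝ) ^ 3 * ρ ((k : ℝ) • y))
    (α β : ℝ) (hα0 : 0 ≤ α) (hα3 : α < 3) :
    ∃ C > 0, ∀ k : ℕ, 1 ≤ k → ∀ x : EuclideanSpace ℝ (Fin 3), x ≠ 0 →
      ∫ y, ρk k y * ‖x - y‖ ^ (-α) * (Real.sqrt (1 + ‖x - y‖ ^ 2)) ^ (-β)
        ≤ C * ‖x‖ ^ (-α) * (Real.sqrt (1 + ‖x‖ ^ 2)) ^ (-β) := by
  obtain ⟨M, hM⟩ := (isCompact_closedBall (0 : EuclideanSpace ℝ (Fin 3)) 1).exists_bound_of_continuousOn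
    hρsm.continuous.continuousOn
  have hM0 : 0 ≤ M := (norm_nonneg _).trans (hM 0 (by simp))
  have hρi : Integrable ρ := by
    by_contra h
    rw [integral_undef h] at hρint
    norm_num at hρint
  set g : EuclideanSpace ℝ (Fin 3) → ℝ :=
    fun w => (Metric.ball (0 : EuclideanSpace ℝ (Fin 3)) 1).indicator (fun w => ‖w‖ ^ (-α)) w with hg
  have hgi : Integrable g := aux_g α hα3
  have hg0 : ∀ w, 0 ≤ g w := fun w => Set.indicator_nonneg (fun w _ => by positivity) w
  have hI : 0 ≤ ∫ w, g w := integral_nonneg hg0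
  refine ⟨2 ^ |β| * 2 ^ α * (1 + M * ∫ w, g w), by positivity, ?_⟩
  intro k hk x hx
  have hk1 : (1 : ℝ) ≤ k := by exact_mod_cast hk
  have hk0 : (0 : ℝ) < k := by linarith
  set c : ℝ := 2 ^ |β| * 2 ^ α * ‖x‖ ^ (-α) * (Real.sqrt (1 + ‖x‖ ^ 2)) ^ (-β) with hc
  have hc0 : 0 ≤ c := by positivity
  set F : EuclideanSpace ℝ (Fin 3) → ℝ := fun z =>
    ρ z * ‖x - (k : ℝ)⁻¹ • z‖ ^ (-α) * (Real.sqrt (1 + ‖x - (k : ℝ)⁻¹ • z‖ ^ 2)) ^ (-β) with hF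
  have h1 : ∫ y, ρk k y * ‖x - y‖ ^ (-α) * (Real.sqrt (1 + ‖x - y‖ ^ 2)) ^ (-β) = ∫ z, F z := by
    have h := Measure.integral_comp_smul_of_nonneg volume F (k : ℝ) (hR := hk0.le)
    rw [finrank_euclideanSpace_fin, smul_eq_mul, eq_inv_mul_iff_mul_eq₀ (by positivity),
      ← integral_const_mul] at h
    rw [← h]
    congr 1
    ext y
    simp only [hF, hρk, inv_smul_smul₀ hk0.ne']
    ring
  have hpt : ∀ z, F z ≤ c * (ρ z + M * g ((k : ℝ) • x - z)) := by
    intro z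
    by_cases hz : ρ z = 0
    · simp only [hF, hz, zero_mul, zero_add]
      have := hg0 ((k : ℝ) • x - z)
      positivity
    · have hz1 := (hρsupp z hz).le
      have hzM : ρ z ≤ M := (Real.le_norm_self _).trans (hM z (by simpa using hz1))
      have hB := aux_bracket β x ((k : ℝ)⁻¹ • z) (by
        rw [norm_smul, norm_inv, Real.norm_of_nonneg hk0.le]
        exact mul_le_one₀ (inv_le_one_of_one_le₀ hk1) (norm_nonneg _) hz1)
      have hS := aux_sing α hα0 ((k : ℝ) • x) z (smul_ne_zero hk0.ne' hx) hz1
      have e1 : ‖(k : ℝ) • x - z‖ = k * ‖x - (k : ℝ)⁻¹ • z‖ := by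
        rw [← Real.norm_of_nonneg hk0.le, ← norm_smul, Real.norm_of_nonneg hk0.le, smul_sub,
          smul_inv_smul₀ hk0.ne']
      have hkp : 0 < (k : ℝ) ^ (-α) := by positivity
      have hS' : ‖x - (k : ℝ)⁻¹ • z‖ ^ (-α) ≤
          2 ^ α * ‖x‖ ^ (-α) * (1 + g ((k : ℝ) • x - z)) := by
        have hS2 : ‖(k : ℝ) • x - z‖ ^ (-α) ≤
          2 ^ α * ‖(k : ℝ) • x‖ ^ (-α) * (1 + g ((k : ℝ) • x - z)) := hS
        rw [e1, norm_smul, Real.norm_of_nonneg hk0.le, Real.mul_rpow hk0.le (norm_nonneg _),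
          Real.mul_rpow hk0.le (norm_nonneg _)] at hS2
        refine le_of_mul_le_mul_left (hS2.trans (le_of_eq ?_)) hkp
        ring
      have hgz := hg0 ((k : ℝ) • x - z)
      calc F z ≤ ρ z * (2 ^ α * ‖x‖ ^ (-α) * (1 + g ((k : ℝ) • x - z))) *
            (2 ^ |β| * (Real.sqrt (1 + ‖x‖ ^ 2)) ^ (-β)) := by
            simp only [hF]
            have := hρnn z
            gcongr
        _ = c * (ρ z + ρ z * g ((k : ℝ) • x - z)) := by rw [hc]; ring
        _ ≤ _ := by gcongr
  have hgi' : Integrable (fun z => g ((k : ℝ) • x - z)) := hgi.comp_sub_left _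
  rw [h1]
  calc ∫ z, F z ≤ ∫ z, c * (ρ z + M * g ((k : ℝ) • x - z)) := by
        refine integral_mono_of_nonneg (Filter.Eventually.of_forall fun z => ?_)
          ((hρi.add (hgi'.const_mul M)).const_mul c) (Filter.Eventually.of_forall hpt)
        have := hρnn z
        simp only [hF, Pi.zero_apply]
        positivity
    _ = c * (1 + M * ∫ w, g w) := by
        rw [integral_const_mul, integral_add hρi (hgi'.const_mul M), hρint, integral_const_mul,
          integral_sub_left_eq_self g volume]
    _ ≤ _ := le_of_eq (by rw [hc]; ring)
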